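/- arXiv:math/0701601 — 5 statements merged into one kernel-verified Lean document; each statement's English description precedes it below -/
import Mathlib

section
/- Let s ≥ 1 and let (g_{n,1},…,g_{n,s}), n ∈ ℕ, be a sequence of s-tuples of elements of Thompson's group F such that the sequence of marked groups (F,(x₀,x₁,g_{n,1},…,g_{n,s})) is convergent in the space of marked groups, and let 𝔾 be its limit group, marked by the images x̄₀, x̄₁, ḡ₁, …, ḡ_s of the free generators. Then for every nontrivial group K there is no group isomorphism φ : 𝔾 → F ∗ K (the free product of F and K) such that φ(x̄₀) and φ(x̄₁) are the images of x₀ and x₁ under the canonical inclusion F → F ∗ K. -/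
/-!
Thompson's group `F` satisfies a law with constants. Let `F` act on the real line, `xₙ` being the
identity on `(-∞, n]`, contracting `[n, n + 2]` onto `[n, n + 1]`, and translating by `-1` on
`[n + 2, ∞)`. Then `a = x₀x₁⁻¹` is supported in `(-∞, 2]` and `b = x₂` in `[2, ∞)`. For `h ∈ F`,
if `h 2 ≤ 2` then `h a h⁻¹` is supported in `(-∞, 2]` and commutes with `b`; otherwise `h b h⁻¹` is
supported in `[2, ∞)` and commutes with `a`. In either case `⁅⁅h a h⁻¹, b⁆, ⁅h b h⁻¹, a⁆⁆ = 1`.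
This law passes to limits of markings of `F`, but in `F ∗ K` it fails at every nontrivial element
of `K`.

As `F` is given by its presentation, the action has to be shown faithful. The two relators imply
`xⱼxᵢ = xᵢxⱼ₊₁` for all `i < j`, and these relations alone make every element a fraction `pq⁻¹` of
positive words and allow the least index of a positive word to be moved to its front. That index
can be read off from the action on the line, so it can be cancelled from `p` and `q` when these
act in the same way, and induction on the length gives `p = q`.
-/

/-- The commutator `[a, b] = a⁻¹ b⁻¹ a b`. -/
def commWord {G : Type*} [Group G] (a b : G) : G := a⁻¹ * b⁻¹ * a * b

/-- The two defining relators of Thompson's group `F`: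
`[x₀x₁⁻¹, x₀⁻ⁱx₁x₀ⁱ]` for `i = 1, 2`. -/
def thompsonRels : Set (FreeGroup (Fin 2)) :=
  {r | ∃ i ∈ ({1, 2} : Set ℕ),
    r = commWord (FreeGroup.of 0 * (FreeGroup.of 1)⁻¹)
        ((FreeGroup.of 0)⁻¹ ^ i * FreeGroup.of 1 * FreeGroup.of 0 ^ i)}

/-- Thompson's group `F`. -/
abbrev ThompsonF : Type := PresentedGroup thompsonRels

/-- The standard generator `x₀` of Thompson's group `F`. -/
def tx0 : ThompsonF := PresentedGroup.of 0

/-- The standard generator `x₁` of Thompson's group `F`. -/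
def tx1 : ThompsonF := PresentedGroup.of 1

section Group

variable {G H : Type*} [Group G] [Group H]

theorem commWord_eq_one_iff_commute {a b : G} : commWord a b = 1 ↔ Commute a b := by
  rw [commWord, commute_iff_eq, mul_assoc, ← mul_inv_rev, inv_mul_eq_one, eq_comm]

theorem commute_mul_inv_iff_conj_eq {a b c : G} :
    Commute (a * b⁻¹) c ↔ a⁻¹ * c * a = b⁻¹ * c * b := by
  rw [commute_iff_eq, eq_comm, ← mul_assoc c, mul_inv_eq_iff_eq_mul, mul_assoc a⁻¹,
    inv_mul_eq_iff_eq_mul]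
  simp only [mul_assoc]

/-! ### Thompson sequences -/

/-- A sequence satisfying the relations `xⱼxᵢ = xᵢxⱼ₊₁`, `i < j`, of the infinite presentation of
Thompson's group. -/
def IsThompsonSeq (x : ℕ → G) : Prop :=
  ∀ ⦃i j⦄, i < j → x j * x i = x i * x (j + 1)

/-- The sequence `x₀, x₁, x₀⁻¹x₁x₀, x₀⁻²x₁x₀², …`, the only candidate for a Thompson sequence
starting with `x₀, x₁`. -/
def conjSeq (x₀ x₁ : G) : ℕ → G
  | 0 => x₀
  | n + 1 => x₀⁻¹ ^ n * x₁ * x₀ ^ n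

variable {x₀ x₁ : G} {x : ℕ → G}

theorem conjSeq_one : conjSeq x₀ x₁ 1 = x₁ := by simp [conjSeq]

theorem conjSeq_add_two (n : ℕ) :
    conjSeq x₀ x₁ (n + 2) = x₀⁻¹ * conjSeq x₀ x₁ (n + 1) * x₀ := by
  simp only [conjSeq, pow_succ x₀, pow_succ' x₀⁻¹, mul_assoc]

theorem map_conjSeq (f : G →* H) (n : ℕ) :
    f (conjSeq x₀ x₁ n) = conjSeq (f x₀) (f x₁) n := by
  cases n <;> simp [conjSeq]

theorem conj_conjSeq (n m : ℕ) :
    MulAut.conj (x₀⁻¹ ^ m) (conjSeq x₀ x₁ (n + 1)) = conjSeq x₀ x₁ (n + m + 1) := by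
  have h : x₀⁻¹ ^ (n + m) = x₀⁻¹ ^ m * x₀⁻¹ ^ n := by rw [add_comm, pow_add]
  simp only [MulAut.conj_apply, conjSeq, h, pow_add x₀, inv_pow, inv_inv, mul_assoc]

theorem conjSeq_mul_conjSeq_of_commute {d : ℕ}
    (h : Commute (x₀ * x₁⁻¹) (conjSeq x₀ x₁ (d + 2))) (i : ℕ) :
    conjSeq x₀ x₁ (d + i + 2) * conjSeq x₀ x₁ (i + 1) =
      conjSeq x₀ x₁ (i + 1) * conjSeq x₀ x₁ (d + i + 3) := by
  have base : conjSeq x₀ x₁ (d + 2) * conjSeq x₀ x₁ 1 =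
      conjSeq x₀ x₁ 1 * conjSeq x₀ x₁ (d + 3) := by
    rw [conjSeq_one, conjSeq_add_two (d + 1), commute_mul_inv_iff_conj_eq.1 h]
    group
  have shifted := congrArg (MulAut.conj (x₀⁻¹ ^ i)) base
  rw [map_mul, map_mul, conj_conjSeq (d + 1), conj_conjSeq 0, conj_conjSeq (d + 2)] at shifted
  convert shifted using 3 <;> ring

/-- The relators for `i = 1, 2` imply all the others, because `xⱼ₊₂ = xⱼ⁻¹xⱼ₊₁xⱼ`. -/
theorem commute_conjSeq_of_commute (h₂ : Commute (x₀ * x₁⁻¹) (conjSeq x₀ x₁ 2))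
    (h₃ : Commute (x₀ * x₁⁻¹) (conjSeq x₀ x₁ 3)) (n : ℕ) :
    Commute (x₀ * x₁⁻¹) (conjSeq x₀ x₁ (n + 2)) := by
  induction n using Nat.twoStepInduction with
  | zero => exact h₂
  | one => exact h₃
  | more n ih ih' =>
    have h := conjSeq_mul_conjSeq_of_commute (d := 0) h₂ (n + 1)
    rw [zero_add, ← inv_mul_eq_iff_eq_mul, ← mul_assoc] at h
    exact h ▸ (ih.inv_right.mul_right ih').mul_right ih

theorem isThompsonSeq_conjSeq (h₂ : Commute (x₀ * x₁⁻¹) (conjSeq x₀ x₁ 2))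
    (h₃ : Commute (x₀ * x₁⁻¹) (conjSeq x₀ x₁ 3)) : IsThompsonSeq (conjSeq x₀ x₁) := by
  rintro (_ | i) j hij
  · obtain ⟨n, rfl⟩ := Nat.exists_eq_add_of_lt hij
    rw [zero_add, conjSeq_add_two n, conjSeq]
    group
  · obtain ⟨d, rfl⟩ := Nat.exists_eq_add_of_lt hij
    convert conjSeq_mul_conjSeq_of_commute (commute_conjSeq_of_commute h₂ h₃ d) i using 3 <;> ring

namespace IsThompsonSeq

theorem conj_zero (hx : IsThompsonSeq x) {n : ℕ} (hn : 0 < n) :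
    (x 0)⁻¹ * x n * x 0 = x (n + 1) := by
  rw [mul_assoc, hx hn, inv_mul_cancel_left]

theorem eq_conjSeq (hx : IsThompsonSeq x) : x = conjSeq (x 0) (x 1) := by
  funext n
  induction n using Nat.twoStepInduction with
  | zero => rfl
  | one => exact conjSeq_one.symm
  | more n _ ih => rw [conjSeq_add_two, ← ih, hx.conj_zero n.succ_pos]

theorem commute_zero_mul_inv_one (hx : IsThompsonSeq x) {n : ℕ} (hn : 2 ≤ n) :
    Commute (x 0 * (x 1)⁻¹) (x n) := by
  rw [commute_mul_inv_iff_conj_eq, hx.conj_zero (by omega), mul_assoc, hx (by omega),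
    inv_mul_cancel_left]

end IsThompsonSeq

/-! ### Positive words -/

/-- The positive word `x_{i₁} x_{i₂} ⋯` in the terms of a sequence, given by its list of
indices. -/
def posWord (x : ℕ → G) (l : List ℕ) : G := (l.map x).prod

@[simp]
theorem posWord_nil : posWord x [] = 1 := rfl

@[simp]
theorem posWord_cons (i : ℕ) (l : List ℕ) : posWord x (i :: l) = x i * posWord x l :=
  List.prod_cons

theorem posWord_append (l l' : List ℕ) : posWord x (l ++ l') = posWord x l * posWord x l' := by
  simp [posWord]

theorem map_posWord (f : G →* H) (l : List ℕ) : f (posWord x l) = posWord (f ∘ x) l := by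
  simp [posWord, map_list_prod]

namespace IsThompsonSeq

theorem exists_posWord_eq_mul_of_min (hx : IsThompsonSeq x) {m : ℕ} {l : List ℕ} (hm : m ∈ l)
    (hle : ∀ i ∈ l, m ≤ i) :
    ∃ t : List ℕ, t.length < l.length ∧ posWord x l = x m * posWord x t := by
  induction l with
  | nil => simp at hm
  | cons i l ih =>
    obtain ⟨hmi, hle⟩ := List.forall_mem_cons.1 hle
    rcases hmi.eq_or_lt with rfl | hlt
    · exact ⟨l, by simp, posWord_cons _ _⟩
    · obtain ⟨t, ht, e⟩ := ih ((List.mem_cons.1 hm).resolve_left hlt.ne) hle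
      refine ⟨(i + 1) :: t, by simpa using ht, ?_⟩
      rw [posWord_cons, posWord_cons, e, ← mul_assoc, hx hlt, mul_assoc]

theorem exists_posWord_mul_posWord_eq (hx : IsThompsonSeq x) (n : ℕ) (l : List ℕ) :
    ∃ p q : List ℕ, posWord x l * posWord x q = x n * posWord x p := by
  induction l generalizing n with
  | nil => exact ⟨[], [n], by simp⟩
  | cons i l ih =>
    rcases lt_trichotomy n i with h | rfl | h
    · obtain ⟨p, q, e⟩ := ih n
      refine ⟨(i + 1) :: p, q, ?_⟩
      rw [posWord_cons, posWord_cons, mul_assoc, e, ← mul_assoc, hx h, mul_assoc]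
    · exact ⟨l, [], by simp⟩
    · obtain ⟨p, q, e⟩ := ih (n + 1)
      refine ⟨i :: p, q, ?_⟩
      rw [posWord_cons, posWord_cons, mul_assoc, e, ← mul_assoc, ← hx h, mul_assoc]

theorem exists_eq_posWord_mul_inv (hx : IsThompsonSeq x) {g : G}
    (hg : g ∈ Subgroup.closure (Set.range x)) :
    ∃ p q : List ℕ, g = posWord x p * (posWord x q)⁻¹ := by
  induction hg using Subgroup.closure_induction_left with
  | one => exact ⟨[], [], by simp⟩
  | mul_left _ hy _ _ ih =>
    obtain ⟨n, rfl⟩ := hy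
    obtain ⟨p, q, rfl⟩ := ih
    exact ⟨n :: p, q, by rw [posWord_cons, mul_assoc]⟩
  | inv_mul_cancel _ hy _ _ ih =>
    obtain ⟨n, rfl⟩ := hy
    obtain ⟨p, q, rfl⟩ := ih
    obtain ⟨p', q', e⟩ := hx.exists_posWord_mul_posWord_eq n p
    refine ⟨p', q ++ q', ?_⟩
    rw [posWord_append, ← inv_mul_eq_iff_eq_mul.2 e]
    group

end IsThompsonSeq

end Group

/-! ### The Thompson sequence on the line -/

/-- The `n`-th generator of Thompson's group as a homeomorphism of the line: the identity on
`(-∞, n]`, of slope `1/2` on `[n, n + 2]`, and `t ↦ t - 1` on `[n + 2, ∞)`. -/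
noncomputable def slide (n : ℕ) : ℝ ≃o ℝ where
  toFun t := t - max 0 (min 1 ((t - n) / 2))
  invFun t := t + max 0 (min 1 (t - n))
  left_inv t := by
    simp only [max_def, min_def]; split_ifs <;> linarith
  right_inv t := by
    simp only [max_def, min_def]; split_ifs <;> linarith
  map_rel_iff' := by
    intro s t
    simp only [Equiv.coe_fn_mk, max_def, min_def]
    split_ifs <;> constructor <;> intro h <;> linarith

section Slide

variable {n : ℕ} {t : ℝ}

theorem slide_apply : slide n t = t - max 0 (min 1 ((t - n) / 2)) := rfl

theorem slide_of_le (h : t ≤ n) : slide n t = t := by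
  rw [slide_apply, min_eq_right (by linarith), max_eq_left (by linarith), sub_zero]

theorem slide_of_ge (h : n + 2 ≤ t) : slide n t = t - 1 := by
  rw [slide_apply, min_eq_left (by linarith), max_eq_right zero_le_one]

theorem slide_le : slide n t ≤ t := by
  rw [slide_apply]; exact sub_le_self _ (le_max_left _ _)

theorem slide_lt (h : n < t) : slide n t < t := by
  rw [slide_apply]; exact sub_lt_self _ (lt_max_of_lt_right (lt_min one_pos (by linarith)))

theorem slide_le_of_le_add_one (h : t ≤ n + 1) {i : ℕ} (hi : i < n) : slide i t ≤ n := by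
  have hi' : (i : ℝ) + 1 ≤ n := by exact_mod_cast hi
  rw [slide_apply]
  simp only [max_def, min_def]
  split_ifs <;> linarith

theorem isThompsonSeq_slide : IsThompsonSeq slide := by
  intro i j hij
  have hij' : (i : ℝ) + 1 ≤ j := by exact_mod_cast hij
  refine RelIso.ext fun t => ?_
  change slide j (slide i t) = slide i (slide (j + 1) t)
  rcases le_total t (j + 1) with h | h
  · rw [slide_of_le (slide_le_of_le_add_one h hij), slide_of_le (n := j + 1) (by exact_mod_cast h)]
  · have h' : (j : ℝ) + 1 ≤ slide (j + 1) t := by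
      have := (slide (j + 1)).monotone h
      rwa [slide_of_le (by push_cast; rfl)] at this
    rw [slide_of_ge (n := i) (by linarith), slide_of_ge (n := i) (by linarith), slide_apply,
      slide_apply]
    push_cast
    ring_nf

theorem posWord_slide_le (l : List ℕ) : posWord slide l t ≤ t := by
  induction l with
  | nil => simp
  | cons i l ih => rw [posWord_cons]; exact slide_le.trans ih

theorem posWord_slide_of_le {l : List ℕ} (hl : ∀ i ∈ l, t ≤ i) : posWord slide l t = t := by
  induction l with
  | nil => simp
  | cons i l ih =>
    obtain ⟨hi, hl⟩ := List.forall_mem_cons.1 hl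
    rw [posWord_cons, RelIso.mul_apply, ih hl, slide_of_le hi]

theorem posWord_slide_lt {l : List ℕ} (hn : n ∈ l) (h : n < t) : posWord slide l t < t := by
  induction l with
  | nil => simp at hn
  | cons i l ih =>
    rw [posWord_cons, RelIso.mul_apply]
    rcases List.mem_cons.1 hn with rfl | hn
    · exact ((slide n).monotone (posWord_slide_le l)).trans_lt (slide_lt h)
    · exact slide_le.trans_lt (ih hn)

theorem exists_mem_le_of_posWord_slide_eq {l l' : List ℕ} (h : posWord slide l = posWord slide l')
    (hn : n ∈ l) : ∃ i ∈ l', i ≤ n := by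
  by_contra! hl'
  have hfix : posWord slide l' (n + 1) = n + 1 :=
    posWord_slide_of_le fun i hi => by exact_mod_cast hl' i hi
  have hmove : posWord slide l (n + 1) < n + 1 := posWord_slide_lt hn (lt_add_one _)
  exact hmove.ne (h ▸ hfix)

end Slide

section Faithful

variable {G : Type*} [Group G] {x : ℕ → G} {f : G →* (ℝ ≃o ℝ)}

theorem exists_common_min_of_posWord_slide_eq {l l' : List ℕ}
    (h : posWord slide l = posWord slide l') (hl : l ≠ []) :
    ∃ m, (m ∈ l ∧ ∀ i ∈ l, m ≤ i) ∧ m ∈ l' ∧ ∀ i ∈ l', m ≤ i := by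
  obtain ⟨m, hm⟩ := Option.isSome_iff_exists.1 (List.isSome_min?_of_ne_nil hl)
  obtain ⟨hml, hmin⟩ := List.min?_eq_some_iff.1 hm
  have hmin' : ∀ i ∈ l', m ≤ i := fun i hi => by
    obtain ⟨j, hj, hji⟩ := exists_mem_le_of_posWord_slide_eq h.symm hi
    exact (hmin j hj).trans hji
  obtain ⟨i, hi, him⟩ := exists_mem_le_of_posWord_slide_eq h hml
  exact ⟨m, ⟨hml, hmin⟩, him.antisymm (hmin' i hi) ▸ hi, hmin'⟩

theorem IsThompsonSeq.posWord_eq_of_map_eq (hx : IsThompsonSeq x) (hf : f ∘ x = slide)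
    {l l' : List ℕ} (h : f (posWord x l) = f (posWord x l')) : posWord x l = posWord x l' := by
  induction hn : l.length using Nat.strong_induction_on generalizing l l' with
  | _ n ih =>
    subst hn
    have hs : posWord slide l = posWord slide l' := by
      rwa [map_posWord, map_posWord, hf] at h
    rcases eq_or_ne l [] with rfl | hl
    · cases l' with
      | nil => rfl
      | cons i l' => simpa using exists_mem_le_of_posWord_slide_eq hs.symm List.mem_cons_self
    · obtain ⟨m, ⟨hm, hmin⟩, hm', hmin'⟩ := exists_common_min_of_posWord_slide_eq hs hl
      obtain ⟨t, ht, e⟩ := hx.exists_posWord_eq_mul_of_min hm hmin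
      obtain ⟨t', -, e'⟩ := hx.exists_posWord_eq_mul_of_min hm' hmin'
      rw [e, e', map_mul, map_mul, mul_right_inj] at h
      rw [e, e', ih _ ht h rfl]

theorem IsThompsonSeq.injective_of_map_eq_slide (hx : IsThompsonSeq x)
    (hgen : Subgroup.closure (Set.range x) = ⊤) (hf : f ∘ x = slide) : Function.Injective f := by
  rw [injective_iff_map_eq_one]
  intro g hg
  obtain ⟨p, q, rfl⟩ := hx.exists_eq_posWord_mul_inv (hgen ▸ Subgroup.mem_top g)
  rw [map_mul, map_inv, mul_inv_eq_one] at hg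
  rw [hx.posWord_eq_of_map_eq hf hg, mul_inv_cancel]

end Faithful

/-! ### The action of Thompson's group on the line -/

namespace ThompsonF

/-- The generators `x₀, x₁, x₂, …` of the infinite presentation of Thompson's group. -/
def gen : ℕ → ThompsonF := conjSeq tx0 tx1

theorem gen_zero : gen 0 = tx0 := rfl

theorem gen_one : gen 1 = tx1 := conjSeq_one

theorem commute_gen_of_mem {i : ℕ} (hi : i ∈ ({1, 2} : Set ℕ)) :
    Commute (tx0 * tx1⁻¹) (gen (i + 1)) := by
  rw [← commWord_eq_one_iff_commute]
  exact PresentedGroup.one_of_mem (rels := thompsonRels) ⟨i, hi, rfl⟩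

theorem isThompsonSeq_gen : IsThompsonSeq gen :=
  isThompsonSeq_conjSeq (commute_gen_of_mem (i := 1) (by simp))
    (commute_gen_of_mem (i := 2) (by simp))

theorem closure_range_gen : Subgroup.closure (Set.range gen) = ⊤ := by
  rw [eq_top_iff, ← PresentedGroup.closure_range_of, Subgroup.closure_le]
  rintro _ ⟨i, rfl⟩
  fin_cases i
  · exact Subgroup.subset_closure ⟨0, gen_zero⟩
  · exact Subgroup.subset_closure ⟨1, gen_one⟩

section Lift

variable {G : Type*} [Group G] {x : ℕ → G}

/-- The homomorphism from Thompson's group determined by a Thompson sequence. -/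
def lift (hx : IsThompsonSeq x) : ThompsonF →* G :=
  PresentedGroup.toGroup (f := ![x 0, x 1]) (by
    rintro _ ⟨i, hi, rfl⟩
    have h : commWord (x 0 * (x 1)⁻¹) ((x 0)⁻¹ ^ i * x 1 * x 0 ^ i) = 1 := by
      change commWord _ (conjSeq (x 0) (x 1) (i + 1)) = 1
      rw [commWord_eq_one_iff_commute, ← hx.eq_conjSeq]
      exact hx.commute_zero_mul_inv_one (by rcases hi with rfl | rfl <;> simp)
    simpa [commWord] using h)

theorem lift_comp_gen (hx : IsThompsonSeq x) : lift hx ∘ gen = x := by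
  funext n
  conv_rhs => rw [hx.eq_conjSeq]
  simp [gen, map_conjSeq, lift, tx0, tx1]

end Lift

/-- The action of Thompson's group on the line by piecewise linear homeomorphisms. -/
noncomputable def lineAction : ThompsonF →* (ℝ ≃o ℝ) := lift isThompsonSeq_slide

theorem lineAction_gen (n : ℕ) : lineAction (gen n) = slide n :=
  congrFun (lift_comp_gen isThompsonSeq_slide) n

theorem lineAction_injective : Function.Injective lineAction :=
  isThompsonSeq_gen.injective_of_map_eq_slide closure_range_gen (lift_comp_gen _)

end ThompsonF

/-! ### The law with constants -/

open scoped commutatorElement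

section ConjLaw

variable {G H : Type*} [Group G] [Group H]

/-- The word in `x` with constants `a` and `b` that is trivial as soon as one of `x a x⁻¹` and `b`,
or `x b x⁻¹` and `a`, commute. -/
def conjLaw (a b x : G) : G := ⁅⁅x * a * x⁻¹, b⁆, ⁅x * b * x⁻¹, a⁆⁆

theorem map_conjLaw (f : G →* H) (a b x : G) : f (conjLaw a b x) = conjLaw (f a) (f b) (f x) := by
  simp only [conjLaw, map_commutatorElement, map_mul, map_inv]

theorem conjLaw_eq_one {a b x : G} (h : Commute (x * a * x⁻¹) b ∨ Commute (x * b * x⁻¹) a) :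
    conjLaw a b x = 1 := by
  rcases h with h | h
  · rw [conjLaw, commutatorElement_eq_one_iff_commute.2 h, commutatorElement_one_left]
  · rw [conjLaw, commutatorElement_eq_one_iff_commute.2 h, commutatorElement_one_right]

end ConjLaw

section OrderIso

open Set

variable {α : Type*} [LinearOrder α] {u v : α ≃o α} {c : α}

theorem commute_of_eqOn_id (hu : EqOn u id (Ici c)) (hv : EqOn v id (Iic c)) : Commute u v := by
  have huc : u c = c := hu self_mem_Ici
  have hvc : v c = c := hv self_mem_Iic
  refine RelIso.ext fun t => ?_
  change u (v t) = v (u t)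
  rcases le_total t c with h | h
  · rw [hv h, id, hv ((u.monotone h).trans_eq huc), id]
  · rw [hu h, id, hu (hvc.symm.trans_le (v.monotone h)), id]

theorem eqOn_id_conj {s : Set α} (hu : EqOn u id s) {h : α ≃o α} (hs : MapsTo ⇑h⁻¹ s s) :
    EqOn (h * u * h⁻¹ : α ≃o α) id s := fun t ht => by
  rw [RelIso.mul_apply, RelIso.mul_apply, hu (hs ht), id, RelIso.apply_inv_self, id]

theorem conjLaw_eq_one_of_eqOn_id (hu : EqOn u id (Ici c)) (hv : EqOn v id (Iic c))
    (h : α ≃o α) : conjLaw u v h = 1 := by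
  refine conjLaw_eq_one ((le_total (h c) c).imp (fun hc => ?_) fun hc => ?_)
  · have hc' : c ≤ h⁻¹ c := by rwa [← h.le_iff_le, RelIso.apply_inv_self]
    exact commute_of_eqOn_id
      (eqOn_id_conj hu fun t ht => hc'.trans ((h⁻¹ : α ≃o α).monotone ht)) hv
  · have hc' : h⁻¹ c ≤ c := by rwa [← h.le_iff_le, RelIso.apply_inv_self]
    exact (commute_of_eqOn_id hu
      (eqOn_id_conj hv fun t ht => ((h⁻¹ : α ≃o α).monotone ht).trans hc')).symm

end OrderIso

namespace ThompsonF

open Set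

theorem eqOn_lineAction_left : EqOn (lineAction (gen 0 * (gen 1)⁻¹)) id (Ici 2) := by
  intro t ht
  have hs : 3 ≤ (slide 1)⁻¹ t := by
    rw [← (slide 1).le_iff_le, RelIso.apply_inv_self, slide_of_ge (by norm_num)]
    exact le_trans (by norm_num) (mem_Ici.1 ht)
  have h1 : slide 1 ((slide 1)⁻¹ t) = (slide 1)⁻¹ t - 1 := slide_of_ge (by push_cast; linarith)
  rw [map_mul, map_inv, lineAction_gen, lineAction_gen, RelIso.mul_apply,
    slide_of_ge (by push_cast; linarith), ← h1, RelIso.apply_inv_self, id]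

theorem lineAction_left_one_ne : lineAction (gen 0 * (gen 1)⁻¹) 1 ≠ 1 := by
  have h1 : (slide 1)⁻¹ 1 = 1 := by
    conv_lhs => rw [← slide_of_le (n := 1) (t := 1) (by simp)]
    exact RelIso.inv_apply_self _ _
  rw [map_mul, map_inv, lineAction_gen, lineAction_gen, RelIso.mul_apply, h1]
  exact (slide_lt (by simp)).ne

theorem eqOn_lineAction_gen (n : ℕ) : EqOn (lineAction (gen n)) id (Iic (n : ℝ)) := fun t ht => by
  rw [lineAction_gen, slide_of_le ht, id]

theorem conjLaw_gen (h : ThompsonF) : conjLaw (gen 0 * (gen 1)⁻¹) (gen 2) h = 1 := by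
  apply lineAction_injective
  rw [map_conjLaw, map_one]
  exact conjLaw_eq_one_of_eqOn_id eqOn_lineAction_left (eqOn_lineAction_gen 2) _

end ThompsonF

/-! ### Free products do not satisfy the law -/

section Coprod

open Monoid.Coprod

variable (A B : Type*) [Group A] [Group B]

/-- The action of `A ∗ B` on `A × B` in which `A` acts by left translations on the fibre `A × {1}`
and `B` on `{1} × B`, each of them fixing all other points. -/
noncomputable def crossAction : Monoid.Coprod A B →* Equiv.Perm (A × B) :=
  Monoid.Coprod.lift
    ((Equiv.Perm.viaEmbeddingHom ⟨fun a => (a, 1), Prod.mk_left_injective 1⟩).comp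
      (MulAction.toPermHom A A))
    ((Equiv.Perm.viaEmbeddingHom ⟨fun b => (1, b), Prod.mk_right_injective 1⟩).comp
      (MulAction.toPermHom B B))

variable {A B}

theorem crossAction_inl_one (x a : A) : crossAction A B (inl x) (a, 1) = (x * a, 1) :=
  Equiv.Perm.viaEmbedding_apply _ ⟨fun a : A => (a, (1 : B)), Prod.mk_left_injective 1⟩ a

theorem crossAction_inl_of_ne (x a : A) {b : B} (hb : b ≠ 1) :
    crossAction A B (inl x) (a, b) = (a, b) :=
  Equiv.Perm.viaEmbedding_apply_of_notMem _ _ _ (by simp [hb.symm])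

theorem crossAction_inr_one (y b : B) : crossAction A B (inr y) (1, b) = (1, y * b) :=
  Equiv.Perm.viaEmbedding_apply _ ⟨fun b : B => ((1 : A), b), Prod.mk_right_injective 1⟩ b

theorem crossAction_inr_of_ne (y b : B) {a : A} (ha : a ≠ 1) :
    crossAction A B (inr y) (a, b) = (a, b) :=
  Equiv.Perm.viaEmbedding_apply_of_notMem _ _ _ (by simp [ha.symm])

section Conj

variable {x y : A} {k : B}

theorem crossAction_conj_of_ne (hy : y ≠ 1) (hxy : x * y ≠ 1) :
    crossAction A B (inr k * inl x * (inr k)⁻¹) (y, 1) = (x * y, 1) := by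
  rw [← map_inv, map_mul, map_mul, Equiv.Perm.mul_apply, Equiv.Perm.mul_apply,
    crossAction_inr_of_ne _ _ hy, crossAction_inl_one, crossAction_inr_of_ne _ _ hxy]

theorem crossAction_conj_of_mul_eq_one (hy : y ≠ 1) (hxy : x * y = 1) :
    crossAction A B (inr k * inl x * (inr k)⁻¹) (y, 1) = (1, k) := by
  rw [← map_inv, map_mul, map_mul, Equiv.Perm.mul_apply, Equiv.Perm.mul_apply,
    crossAction_inr_of_ne _ _ hy, crossAction_inl_one, hxy, crossAction_inr_one, mul_one]

theorem crossAction_conj_one_left (hx : x ≠ 1) :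
    crossAction A B (inr k * inl x * (inr k)⁻¹) (1, k) = (x, 1) := by
  rw [← map_inv, map_mul, map_mul, Equiv.Perm.mul_apply, Equiv.Perm.mul_apply,
    crossAction_inr_one, inv_mul_cancel, crossAction_inl_one, mul_one,
    crossAction_inr_of_ne _ _ hx]

theorem crossAction_conj_one (hk : k ≠ 1) :
    crossAction A B (inr k * inl x * (inr k)⁻¹) (1, 1) = (1, 1) := by
  rw [← map_inv, map_mul, map_mul, Equiv.Perm.mul_apply, Equiv.Perm.mul_apply,
    crossAction_inr_one, mul_one, crossAction_inl_of_ne _ _ (inv_ne_one.2 hk),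
    crossAction_inr_one, mul_inv_cancel]

theorem crossAction_commutator_conj (p : A × B) :
    crossAction A B ⁅inr k * inl x * (inr k)⁻¹, inl y⁆ p =
      crossAction A B (inr k * inl x * (inr k)⁻¹) (crossAction A B (inl y)
        (crossAction A B (inr k * inl x⁻¹ * (inr k)⁻¹) (crossAction A B (inl y⁻¹) p))) := by
  simp only [commutatorElement_def, conj_inv, map_mul, map_inv, Equiv.Perm.mul_apply]

end Conj

/-- With `u` and `v` the two inner commutators of the law, `u * v` moves the point `(b, 1)` to
`(1, k)`, whereas `v * u` fixes it. -/
theorem conjLaw_inl_inl_inr_ne_one {a b : A} {k : B} (hab : Commute a b) (ha : a ≠ 1) (hb : b ≠ 1)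
    (hne : a ≠ b) (hmul : a * b ≠ 1) (hk : k ≠ 1) :
    conjLaw (inl a) (inl b) (inr k : Monoid.Coprod A B) ≠ 1 := by
  let u : Monoid.Coprod A B := ⁅inr k * inl a * (inr k)⁻¹, inl b⁆
  let v : Monoid.Coprod A B := ⁅inr k * inl b * (inr k)⁻¹, inl a⁆
  have ha' : a⁻¹ ≠ 1 := inv_ne_one.2 ha
  have hb' : b⁻¹ ≠ 1 := inv_ne_one.2 hb
  have hne' : a⁻¹ * b ≠ 1 := by rwa [Ne, inv_mul_eq_one]
  have hmul' : a⁻¹ * b⁻¹ ≠ 1 := by rwa [← mul_inv_rev, ← hab.eq, inv_ne_one]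
  have hcancel : b⁻¹ * (a⁻¹ * b) = a⁻¹ := by
    rw [← hab.symm.inv_right.eq, inv_mul_cancel_left]
  have hcancel' : b * (a⁻¹ * b⁻¹) = a⁻¹ := by rw [hab.inv_inv.eq, mul_inv_cancel_left]
  have u_b : crossAction A B u (b, 1) = (a * b, 1) := by
    rw [crossAction_commutator_conj, crossAction_inl_one, inv_mul_cancel, crossAction_conj_one hk,
      crossAction_inl_one, mul_one, crossAction_conj_of_ne hb hmul]
  have v_ab : crossAction A B v (a * b, 1) = (b, 1) := by
    rw [crossAction_commutator_conj, crossAction_inl_one, inv_mul_cancel_left,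
      crossAction_conj_of_mul_eq_one hb (inv_mul_cancel b), crossAction_inl_of_ne _ _ hk,
      crossAction_conj_one_left hb]
  have v_b : crossAction A B v (b, 1) = (1, 1) := by
    rw [crossAction_commutator_conj, crossAction_inl_one,
      crossAction_conj_of_ne hne' (by rwa [hcancel]), hcancel, crossAction_inl_one, mul_inv_cancel,
      crossAction_conj_one hk]
  have u_one : crossAction A B u (1, 1) = (1, k) := by
    rw [crossAction_commutator_conj, crossAction_inl_one, mul_one, crossAction_conj_of_ne hb' hmul',
      crossAction_inl_one, hcancel', crossAction_conj_of_mul_eq_one ha' (mul_inv_cancel a)]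
  rw [conjLaw, Ne, commutatorElement_eq_one_iff_commute]
  intro huv
  have h : crossAction A B (u * v) (b, 1) = crossAction A B (v * u) (b, 1) := by rw [huv.eq]
  rw [map_mul, map_mul, Equiv.Perm.mul_apply, Equiv.Perm.mul_apply, v_b, u_one, u_b, v_ab] at h
  exact hb (congrArg Prod.fst h).symm

end Coprod

namespace ThompsonF

open Monoid.Coprod

theorem conjLaw_inr_ne_one {K : Type*} [Group K] {k : K} (hk : k ≠ 1) :
    conjLaw (inl (gen 0 * (gen 1)⁻¹)) (inl (gen 2)) (inr k : Monoid.Coprod ThompsonF K) ≠ 1 := by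
  have ha : lineAction (gen 0 * (gen 1)⁻¹) 1 ≠ 1 := lineAction_left_one_ne
  have hb : lineAction (gen 2) 1 = 1 := eqOn_lineAction_gen 2 (by simp)
  refine conjLaw_inl_inl_inr_ne_one (isThompsonSeq_gen.commute_zero_mul_inv_one le_rfl)
    (fun h => ha ?_) (fun h => ?_) (fun h => ha ?_) (fun h => ha ?_) hk
  · rw [h, map_one lineAction, RelIso.one_apply]
  · have h3 : slide 2 3 < 3 := slide_lt (by norm_num)
    rw [← lineAction_gen, h, map_one lineAction] at h3
    exact h3.ne rfl
  · rw [h, hb]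
  · have hone := congrArg (fun g => lineAction g 1) h
    simpa only [map_mul lineAction (_ * _), RelIso.mul_apply, hb, map_one lineAction,
      RelIso.one_apply] using hone

end ThompsonF

open Monoid.Coprod ThompsonF in
theorem stmt0_general {Γ ι : Type*} [Group Γ] {l : Filter ι} {ev : ι → Γ →* ThompsonF} {y₀ y₁ : Γ}
    (h₀ : ∀ n, ev n y₀ = tx0) (h₁ : ∀ n, ev n y₁ = tx1) {N : Subgroup Γ} [N.Normal]
    (hN : ∀ w, w ∈ N ↔ ∀ᶠ n in l, ev n w = 1) {K : Type*} [Group K] [Nontrivial K] :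
    ¬ ∃ φ : Γ ⧸ N →* Monoid.Coprod ThompsonF K,
      Function.Surjective φ ∧ φ (QuotientGroup.mk y₀) = inl tx0 ∧
        φ (QuotientGroup.mk y₁) = inl tx1 := by
  rintro ⟨φ, hφ, hφ₀, hφ₁⟩
  obtain ⟨k, hk⟩ := exists_ne (1 : K)
  let ψ : Γ →* Monoid.Coprod ThompsonF K := φ.comp (QuotientGroup.mk' N)
  have hψ₀ : ψ y₀ = inl tx0 := hφ₀
  have hψ₁ : ψ y₁ = inl tx1 := hφ₁
  obtain ⟨w, hw⟩ : ∃ w, ψ w = inr k := hφ.comp (QuotientGroup.mk'_surjective N) (inr k)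
  let law : Γ := conjLaw (conjSeq y₀ y₁ 0 * (conjSeq y₀ y₁ 1)⁻¹) (conjSeq y₀ y₁ 2) w
  have law_mem : law ∈ N := (hN law).2 <| .of_forall fun n => by
    simp only [law, map_conjLaw, map_mul, map_inv, map_conjSeq, h₀, h₁]
    exact conjLaw_gen (ev n w)
  have law_eq_one : ψ law = 1 := by
    rw [MonoidHom.comp_apply, QuotientGroup.mk'_apply, (QuotientGroup.eq_one_iff law).2 law_mem,
      map_one]
  have map_law : ψ law = conjLaw (inl (gen 0 * (gen 1)⁻¹)) (inl (gen 2)) (inr k) := by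
    simp only [law, gen, map_conjLaw, map_mul, map_inv, map_conjSeq, hψ₀, hψ₁, hw]
  exact conjLaw_inr_ne_one hk (map_law ▸ law_eq_one)

/-- No limit of a convergent sequence of markings `(F, (x₀, x₁, g_{n,1}, …, g_{n,s}))` of
Thompson's group `F` is a free product `F ∗ K` with `K` nontrivial (compatibly with the
marking on the `F`-part). -/
theorem stmt0 (s : ℕ) (hs : 1 ≤ s) (g : ℕ → Fin s → ThompsonF)
    (ev : ℕ → FreeGroup (Fin (s + 2)) →* ThompsonF)
    (hev : ∀ n, ev n = FreeGroup.lift (fun i : Fin (s + 2) =>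
      if h : (i : ℕ) < 2 then (if (i : ℕ) = 0 then tx0 else tx1)
      else g n ⟨(i : ℕ) - 2, by have := i.isLt; omega⟩))
    (hconv : ∀ w : FreeGroup (Fin (s + 2)),
      (∀ᶠ n in Filter.atTop, ev n w = 1) ∨ (∀ᶠ n in Filter.atTop, ev n w ≠ 1))
    (N : Subgroup (FreeGroup (Fin (s + 2)))) [hN : N.Normal]
    (hNdef : ∀ w, w ∈ N ↔ ∀ᶠ n in Filter.atTop, ev n w = 1)
    (K : Type*) [Group K] (hK : ∃ k : K, k ≠ 1) :
    ¬ ∃ φ : (FreeGroup (Fin (s + 2)) ⧸ N) ≃* Monoid.Coprod ThompsonF K,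
      φ (QuotientGroup.mk (FreeGroup.of ⟨0, by omega⟩)) = Monoid.Coprod.inl tx0 ∧
      φ (QuotientGroup.mk (FreeGroup.of ⟨1, by omega⟩)) = Monoid.Coprod.inl tx1 := by
  rintro ⟨φ, h₀, h₁⟩
  have : Nontrivial K := hK.elim fun k hk => nontrivial_of_ne k 1 hk
  have hev₀ (n : ℕ) : ev n (FreeGroup.of ⟨0, by omega⟩) = tx0 := by simp [hev]
  have hev₁ (n : ℕ) : ev n (FreeGroup.of ⟨1, by omega⟩) = tx1 := by simp [hev]
  exact stmt0_general hev₀ hev₁ hNdef ⟨φ.toMonoidHom, φ.surjective, h₀, h₁⟩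
end

section
/- Let F∞ be the presented group on generators x₀, x₁, x₂, … (indexed by ℕ) with relations x_j x_i = x_i x_{j+1} for all i < j. Let n ∈ ℕ and let a₀,…,a_n, b₀,…,b_n be non-negative integers, and set g = x₀^{a₀} x₁^{a₁} ⋯ x_n^{a_n} x_n^{−b_n} ⋯ x₁^{−b₁} x₀^{−b₀} in F∞, s = Σ_{i=0}^{n} (a_i − b_i), and t = |s|. Then there exists M ∈ ℕ such that either g⁻¹ x_m g = x_{m+t} for all m > M, or g x_m g⁻¹ = x_{m+t} for all m > M. -/
/-!
The relations say that conjugation by a generator `x_i` raises the index of every later generator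
by one. Index shifts add under multiplication, so a positive word in `x_0, …, x_n` raises the
indices above `n` by its exponent sum. If `g = p q⁻¹` with `p`, `q` positive words of exponent
sums `A`, `B`, then conjugation by `g` shifts by `A - B` when `B ≤ A`; otherwise the same argument
applies to `g⁻¹ = q p⁻¹`. One may take `M = n`.
-/

/-- The defining relators of the infinite presentation of Thompson's group `F`:
`x_i⁻¹ x_j x_i x_{j+1}⁻¹` for all `i < j`. -/
def thompsonInfRels : Set (FreeGroup ℕ) :=
  {r | ∃ i j : ℕ, i < j ∧
    r = (FreeGroup.of i)⁻¹ * FreeGroup.of j * FreeGroup.of i * (FreeGroup.of (j + 1))⁻¹}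

/-- Thompson's group `F` in its standard infinite presentation. -/
abbrev ThompsonFInf : Type := PresentedGroup thompsonInfRels

/-- The generator `x_i` of Thompson's group `F` (infinite presentation). -/
def xi (i : ℕ) : ThompsonFInf := PresentedGroup.of i

/-- Conjugation by `g` shifts the sequence `x` by `k` places from index `N` on: in a group,
`g⁻¹ * x m * g = x (m + k)` for all `m ≥ N`. It is stated without inverses, as
`g * x (m + k) = x m * g`, so that it makes sense in a monoid. -/
def ShiftsFrom {M : Type*} [Mul M] (x : ℕ → M) (N k : ℕ) (g : M) : Prop :=
  ∀ m, N ≤ m → SemiconjBy g (x (m + k)) (x m)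

namespace ShiftsFrom

protected theorem mono {M : Type*} [Mul M] {x : ℕ → M} {N N' k : ℕ} {g : M}
    (hg : ShiftsFrom x N k g) (hN : N ≤ N') : ShiftsFrom x N' k g :=
  fun m hm => hg m (hN.trans hm)

protected theorem mul {S : Type*} [Semigroup S] {x : ℕ → S} {N k l : ℕ} {g h : S}
    (hg : ShiftsFrom x N k g) (hh : ShiftsFrom x N l h) :
    ShiftsFrom x N (k + l) (g * h) := fun m hm => by
  rw [← add_assoc]
  exact (hg m hm).mul_left (hh (m + k) (Nat.le_add_right_of_le hm))

protected theorem one {M : Type*} [MulOneClass M] {x : ℕ → M} {N : ℕ} : ShiftsFrom x N 0 1 :=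
  fun m _ => SemiconjBy.one_left (x m)

section Monoid

variable {M : Type*} [Monoid M] {x : ℕ → M} {N : ℕ}

protected theorem pow {k : ℕ} {g : M} (hg : ShiftsFrom x N k g) (n : ℕ) :
    ShiftsFrom x N (n * k) (g ^ n) := by
  induction n with
  | zero => simpa only [Nat.zero_mul, pow_zero] using ShiftsFrom.one
  | succ n ih => simpa only [Nat.succ_mul, pow_succ] using ih.mul hg

theorem prod_range {g : ℕ → M} {k : ℕ → ℕ} (n : ℕ) (hg : ∀ i < n, ShiftsFrom x N (k i) (g i)) :
    ShiftsFrom x N (∑ i ∈ Finset.range n, k i) ((List.range n).map g).prod := by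
  induction n with
  | zero => exact .one
  | succ n ih =>
    rw [Finset.sum_range_succ, List.prod_range_succ]
    exact (ih fun i hi => hg i (Nat.lt_succ_of_lt hi)).mul (hg n n.lt_succ_self)

end Monoid

section Group

variable {G : Type*} [Group G] {x : ℕ → G} {N k l : ℕ} {g h : G}

protected theorem mul_inv (hg : ShiftsFrom x N (k + l) g) (hh : ShiftsFrom x N l h) :
    ShiftsFrom x N k (g * h⁻¹) := fun m hm => by
  have hgm : SemiconjBy g (x (m + k + l)) (x m) := by simpa only [add_assoc] using hg m hm
  exact hgm.mul_left (hh (m + k) (Nat.le_add_right_of_le hm)).inv_symm_left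

theorem inv_mul_mul_eq (hg : ShiftsFrom x N k g) {m : ℕ} (hm : N ≤ m) :
    g⁻¹ * x m * g = x (m + k) := by
  rw [mul_assoc, ← (hg m hm).eq, inv_mul_cancel_left]

end Group

end ShiftsFrom

theorem inv_xi_mul_xi_mul_xi {i j : ℕ} (hij : i < j) : (xi i)⁻¹ * xi j * xi i = xi (j + 1) :=
  mul_inv_eq_one.mp <| PresentedGroup.one_of_mem (rels := thompsonInfRels) ⟨i, j, hij, rfl⟩

theorem shiftsFrom_xi (i : ℕ) : ShiftsFrom xi (i + 1) 1 (xi i) := fun j hij => by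
  rw [SemiconjBy, ← inv_xi_mul_xi_mul_xi hij, mul_assoc, mul_inv_cancel_left]

theorem shiftsFrom_prod_xi_pow (n : ℕ) (a : ℕ → ℕ) :
    ShiftsFrom xi n (∑ i ∈ Finset.range n, a i) ((List.range n).map fun i => xi i ^ a i).prod :=
  .prod_range n fun i hi => by
    simpa only [mul_one] using ((shiftsFrom_xi i).mono hi).pow (a i)

/-- If `g = x₀^{a₀} ⋯ x_n^{a_n} x_n^{-b_n} ⋯ x₀^{-b₀}` and
`t = |Σ (a_i - b_i)|`, then there is `M` such that for all `m > M`,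
`g⁻¹ x_m g = x_{m+t}` or `g x_m g⁻¹ = x_{m+t}`. -/
theorem stmt3 (n : ℕ) (a b : ℕ → ℕ)
    (g : ThompsonFInf)
    (hg : g = ((List.range (n + 1)).map fun i => xi i ^ a i).prod *
      (((List.range (n + 1)).map fun i => xi i ^ b i).prod)⁻¹)
    (s : ℤ) (hs : s = ∑ i ∈ Finset.range (n + 1), ((a i : ℤ) - (b i : ℤ)))
    (t : ℕ) (ht : (t : ℤ) = |s|) :
    ∃ M : ℕ, (∀ m : ℕ, M < m → g⁻¹ * xi m * g = xi (m + t)) ∨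
      (∀ m : ℕ, M < m → g * xi m * g⁻¹ = xi (m + t)) := by
  have hp := shiftsFrom_prod_xi_pow (n + 1) a
  have hq := shiftsFrom_prod_xi_pow (n + 1) b
  have hsum : ∑ i ∈ Finset.range (n + 1), a i = t + ∑ i ∈ Finset.range (n + 1), b i ∨
      ∑ i ∈ Finset.range (n + 1), b i = t + ∑ i ∈ Finset.range (n + 1), a i := by
    rw [Finset.sum_sub_distrib, ← Nat.cast_sum, ← Nat.cast_sum] at hs
    rcases abs_choice s with hs' | hs' <;> omega
  refine ⟨n, hsum.imp (fun hab m hm => ?_) (fun hba m hm => ?_)⟩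
  · rw [hab] at hp
    rw [hg]
    exact (hp.mul_inv hq).inv_mul_mul_eq hm
  · rw [hba] at hq
    simpa only [hg, mul_inv_rev, inv_inv] using (hq.mul_inv hp).inv_mul_mul_eq hm
end

section
/- Let F∞ be the presented group on generators x₀, x₁, x₂, … (indexed by ℕ) with relations x_j x_i = x_i x_{j+1} for all i < j. Let n ∈ ℕ and let a₀,…,a_n, b₀,…,b_n be non-negative integers, and set g = x₀^{a₀} x₁^{a₁} ⋯ x_n^{a_n} x_n^{−b_n} ⋯ x₁^{−b₁} x₀^{−b₀} in F∞, s = Σ_{i=0}^{n} (a_i − b_i), and t = |s|. Then there exists M ∈ ℕ such that either g^{−k} x_m g^{k} = x_{m+kt} for all m > M and all integers k > 0, or g^{k} x_m g^{−k} = x_{m+kt} for all m > M and all integers k > 0. -/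
/-!
Let `χ : F → ℤ` be the character sending every generator to `1`. Conjugation by `x_i` raises every
index above `i` by `1`, and shifts of large indices compose and invert, so conjugation by any
`g` shifts all sufficiently large indices by `χ g`. If `χ g ≥ 0`, the shifted index stays above the
threshold `M`, so the same `M` serves all powers of `g`; if `χ g ≤ 0`, this applies to `g⁻¹`.
-/

open Filter

theorem semiconjBy_xi {i j : ℕ} (hij : i < j) : SemiconjBy (xi i) (xi (j + 1)) (xi j) := by
  have hrel : (xi i)⁻¹ * xi j * xi i * (xi (j + 1))⁻¹ = 1 :=
    PresentedGroup.one_of_mem ⟨i, j, hij, rfl⟩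
  rw [mul_inv_eq_one, mul_assoc, inv_mul_eq_iff_eq_mul] at hrel
  exact hrel.symm

/-- Conjugation by `g` shifts all sufficiently large indices by `d`: `x_{m+d} = g⁻¹ x_m g`. The
index `m` ranges over `ℤ`, so that translation by a negative `d` is a bijection; `Int.toNat` alters
only negative indices, which the filter ignores. -/
def IsEventualShift (g : ThompsonFInf) (d : ℤ) : Prop :=
  ∀ᶠ m : ℤ in atTop, SemiconjBy g (xi (m + d).toNat) (xi m.toNat)

namespace IsEventualShift

variable {g h : ThompsonFInf} {d e : ℤ}

theorem one : IsEventualShift 1 0 :=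
  Eventually.of_forall fun m => by simp

theorem mul (hg : IsEventualShift g d) (hh : IsEventualShift h e) :
    IsEventualShift (g * h) (d + e) := by
  have hh' := (tendsto_atTop_add_const_right atTop d tendsto_id).eventually hh
  filter_upwards [hg, hh'] with m hgm hhm
  rw [← add_assoc]
  exact hgm.mul_left hhm

theorem inv (hg : IsEventualShift g d) : IsEventualShift g⁻¹ (-d) := by
  have hg' := (tendsto_atTop_add_const_right atTop (-d) tendsto_id).eventually hg
  filter_upwards [hg'] with m hgm
  simpa only [id, neg_add_cancel_right] using hgm.inv_symm_left

theorem exists_forall_conj_pow {t : ℕ} (hg : IsEventualShift g t) :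
    ∃ M : ℕ, ∀ m : ℕ, M < m → ∀ k : ℕ, g⁻¹ ^ k * xi m * g ^ k = xi (m + k * t) := by
  obtain ⟨M, hM⟩ := eventually_atTop.mp hg
  refine ⟨M.toNat, fun m hm k => ?_⟩
  have hpow : SemiconjBy (g ^ k) (xi (m + k * t)) (xi m) := by
    induction k with
    | zero => simp
    | succ k ih =>
      have hstep : SemiconjBy g (xi (m + k * t + t)) (xi (m + k * t)) :=
        hM (m + k * t : ℕ) (by lia)
      rw [pow_succ, add_one_mul, ← add_assoc]
      exact ih.mul_left hstep
  rw [inv_pow, mul_assoc, inv_mul_eq_iff_eq_mul]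
  exact hpow.symm

end IsEventualShift

theorem isEventualShift_xi (i : ℕ) : IsEventualShift (xi i) 1 := by
  filter_upwards [eventually_gt_atTop (i : ℤ)] with m him
  rw [show (m + 1).toNat = m.toNat + 1 by lia]
  exact semiconjBy_xi (by lia)

/-- The character of `F` sending every generator `x_i` to `1`; on a word in the generators it is the
sum of the exponents. It computes the eventual shift of every element. -/
def exponentSum : ThompsonFInf →* Multiplicative ℤ :=
  PresentedGroup.toGroup (f := fun _ => Multiplicative.ofAdd 1) <| by
    rintro _ ⟨i, j, -, rfl⟩
    simp

@[simp]
theorem exponentSum_xi (i : ℕ) : exponentSum (xi i) = Multiplicative.ofAdd 1 :=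
  PresentedGroup.toGroup.of _

theorem toAdd_exponentSum_prod_xi_pow (c : ℕ → ℕ) (n : ℕ) :
    (exponentSum ((List.range n).map fun i => xi i ^ c i).prod).toAdd =
      ∑ i ∈ Finset.range n, (c i : ℤ) := by
  induction n with
  | zero => simp
  | succ n ih => simp [List.range_succ, Finset.sum_range_succ, ih]

theorem isEventualShift_exponentSum (g : ThompsonFInf) :
    IsEventualShift g (exponentSum g).toAdd := by
  have hg : g ∈ Subgroup.closure (Set.range xi) :=
    (PresentedGroup.closure_range_of thompsonInfRels).ge (Subgroup.mem_top g)
  induction hg using Subgroup.closure_induction with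
  | mem _ hx =>
    obtain ⟨i, rfl⟩ := hx
    simpa using isEventualShift_xi i
  | one => simpa using IsEventualShift.one
  | mul g h _ _ hg hh => simpa using hg.mul hh
  | inv g _ hg => simpa using hg.inv

theorem stmt4_general (g : ThompsonFInf) (t : ℕ) (ht : (t : ℤ) = |(exponentSum g).toAdd|) :
    ∃ M : ℕ,
      (∀ m : ℕ, M < m → ∀ k : ℕ, g⁻¹ ^ k * xi m * g ^ k = xi (m + k * t)) ∨
      (∀ m : ℕ, M < m → ∀ k : ℕ, g ^ k * xi m * g⁻¹ ^ k = xi (m + k * t)) := by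
  have hg := isEventualShift_exponentSum g
  rcases abs_choice (exponentSum g).toAdd with habs | habs
  · rw [← habs, ← ht] at hg
    exact hg.exists_forall_conj_pow.imp fun _ => Or.inl
  · have hg' := hg.inv
    rw [← habs, ← ht] at hg'
    simpa only [inv_inv] using hg'.exists_forall_conj_pow.imp fun _ => Or.inr

/-- If `g = x₀^{a₀} ⋯ x_n^{a_n} x_n^{-b_n} ⋯ x₀^{-b₀}` and
`t = |Σ (a_i - b_i)|`, then there is `M` such that for all `m > M` and all `k > 0`,
`g⁻ᵏ x_m gᵏ = x_{m+kt}` or `gᵏ x_m g⁻ᵏ = x_{m+kt}`. -/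
theorem stmt4 (n : ℕ) (a b : ℕ → ℕ)
    (g : ThompsonFInf)
    (hg : g = ((List.range (n + 1)).map fun i => xi i ^ a i).prod *
      (((List.range (n + 1)).map fun i => xi i ^ b i).prod)⁻¹)
    (s : ℤ) (hs : s = ∑ i ∈ Finset.range (n + 1), ((a i : ℤ) - (b i : ℤ)))
    (t : ℕ) (ht : (t : ℤ) = |s|) :
    ∃ M : ℕ,
      (∀ m : ℕ, M < m → ∀ k : ℕ, 0 < k → g⁻¹ ^ k * xi m * g ^ k = xi (m + k * t)) ∨
      (∀ m : ℕ, M < m → ∀ k : ℕ, 0 < k → g ^ k * xi m * g⁻¹ ^ k = xi (m + k * t)) := by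
  have hsum : (exponentSum g).toAdd = s := by
    simp [hg, hs, toAdd_exponentSum_prod_xi_pow, sub_eq_add_neg, Finset.sum_add_distrib]
  exact (stmt4_general g t (hsum ▸ ht)).imp fun _ =>
    Or.imp (fun h m hm k _ => h m hm k) fun h m hm k _ => h m hm k
end

section
/- Let H and K be groups and let f ∈ K be an element of infinite order. Let φ : ℤ ∗ H → H ∗ K be the group homomorphism from the free product of the free group on one generator y with H to the free product H ∗ K which sends y to the image of f under the canonical inclusion K → H ∗ K and sends each element of H to its image under the canonical inclusion H → H ∗ K. Then for every element w of ℤ ∗ H that does not lie in the image of the canonical inclusion H → ℤ ∗ H, one has φ(w) ≠ 1. -/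
/-!
Since `f` has infinite order, `y ↦ f` embeds the free group on `y` into `K`, so up to exchanging the
two factors `φ` is the free product of this embedding with the identity of `H`. It is therefore
enough that free products of injective homomorphisms are injective.

For this, let `g : M →* M'` be injective. As an `M`-set, `M ∗ N` is free, hence it embeds into a
free `M'`-set. Letting `N` act by left multiplication on the image of this embedding and trivially
outside it, one obtains an action of `M' ∗ N` whose restriction along `M ∗ N →* M' ∗ N` extends the
left regular action of `M ∗ N`. The latter is faithful, so `M ∗ N →* M' ∗ N` is injective.
-/

open Function

section Coprod

open Monoid.Coprod

open Monoid (Coprod)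

variable {M M' N N' : Type*} [Group M'] [Group N'] [Group M] [Group N]

/-- The embedding of the free `M`-set `M ∗ N` into a free `M'`-set along an injective homomorphism
`g : M →* M'`. The retraction `fst : M ∗ N →* M` is `M`-equivariant, so the second coordinate is a
representative of the `M`-orbit of `x`. -/
def coprodEmbedding (g : M →* M') (hg : Injective g) : Coprod M N ↪ M' × Coprod M N where
  toFun x := (g (fst x), (inl (fst x))⁻¹ * x)
  inj' x z hxz := by
    obtain ⟨hfst, horbit⟩ := Prod.mk.inj hxz
    rw [hg hfst] at horbit
    exact mul_left_cancel horbit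

lemma coprodEmbedding_inl_mul (g : M →* M') (hg : Injective g) (m : M) (x : Coprod M N) :
    coprodEmbedding g hg (inl m * x) = (g m, 1) * coprodEmbedding g hg x := by
  refine Prod.ext ?_ ?_
  · change g (fst (inl m * x)) = g m * g (fst x)
    rw [map_mul, fst_apply_inl, map_mul]
  · change (inl (fst (inl m * x)))⁻¹ * (inl m * x) = 1 * ((inl (fst x))⁻¹ * x)
    rw [map_mul, fst_apply_inl, map_mul]
    group

/-- The action of `M' ∗ N` on `M' × (M ∗ N)` in which `M'` multiplies the first coordinate and `N`
acts by left multiplication on the copy of `M ∗ N` given by `coprodEmbedding`, and trivially outside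
that copy. -/
noncomputable def coprodPermHom (g : M →* M') (hg : Injective g) :
    Coprod M' N →* Equiv.Perm (M' × Coprod M N) :=
  lift ((MulAction.toPermHom _ _).comp (MonoidHom.inl M' (Coprod M N)))
    ((Equiv.Perm.viaEmbeddingHom (coprodEmbedding g hg)).comp
      ((MulAction.toPermHom _ _).comp (inr : N →* Coprod M N)))

lemma coprodPermHom_map_coprodEmbedding (g : M →* M') (hg : Injective g) (w x : Coprod M N) :
    coprodPermHom g hg (map g (.id N) w) (coprodEmbedding g hg x) =
      coprodEmbedding g hg (w * x) := by
  induction w using induction_on generalizing x with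
  | inl m => exact (coprodEmbedding_inl_mul g hg m x).symm
  | inr n => exact Equiv.Perm.viaEmbedding_apply _ (coprodEmbedding g hg) x
  | mul v w hv hw => rw [map_mul, map_mul, Equiv.Perm.mul_apply, hw, hv, mul_assoc]

lemma coprod_map_id_injective {g : M →* M'} (hg : Injective g) : Injective (map g (.id N)) := by
  intro v w hvw
  have h := coprodPermHom_map_coprodEmbedding g hg v 1
  rw [hvw, coprodPermHom_map_coprodEmbedding] at h
  simpa only [mul_one] using ((coprodEmbedding g hg).injective h).symm

lemma coprod_map_injective {g : M →* M'} {h : N →* N'} (hg : Injective g) (hh : Injective h) :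
    Injective (map g h) := by
  have hfactor : map g h =
      (map g (.id N')).comp ((swap N' M).comp ((map h (.id M)).comp (swap M N))) := by
    ext x <;> rfl
  rw [hfactor]
  exact (coprod_map_id_injective hg).comp <| swap_injective.comp <|
    (coprod_map_id_injective hh).comp swap_injective

end Coprod

lemma freeGroup_lift_injective_of_not_isOfFinOrder {α G : Type*} [Unique α] [Group G] {g : G}
    (hg : ¬IsOfFinOrder g) : Injective (FreeGroup.lift fun _ : α => g) := by
  have hcomp : (FreeGroup.lift fun _ : α => g) ∘ FreeGroup.equivIntOfUnique.symm =
      fun n : ℤ => g ^ n := by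
    ext n
    change FreeGroup.lift _ (FreeGroup.of default ^ n) = g ^ n
    rw [map_zpow, FreeGroup.lift_apply_of]
  rw [← FreeGroup.equivIntOfUnique.symm.injective_comp, hcomp]
  exact injective_zpow_iff_not_isOfFinOrder.2 hg

theorem stmt9_general (H K : Type*) [Group H] [Group K] (f : K)
    (hf : ∀ k : ℤ, k ≠ 0 → f ^ k ≠ 1)
    (φ : Monoid.Coprod (FreeGroup Unit) H →* Monoid.Coprod H K)
    (hφ : φ = Monoid.Coprod.lift
      (FreeGroup.lift fun _ : Unit => (Monoid.Coprod.inr f : Monoid.Coprod H K))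
      (Monoid.Coprod.inl : H →* Monoid.Coprod H K)) :
    Injective φ := by
  have hf' : ¬IsOfFinOrder f := by simpa [isOfFinOrder_iff_zpow_eq_one] using hf
  have hφ' : φ = (Monoid.Coprod.swap K H).comp
      (Monoid.Coprod.map (FreeGroup.lift fun _ : Unit => f) (.id H)) := by
    subst hφ
    ext x <;> simp
  rw [hφ']
  exact Monoid.Coprod.swap_injective.comp <|
    coprod_map_injective (freeGroup_lift_injective_of_not_isOfFinOrder hf') injective_id

/-- If `f ∈ K` has infinite order, then the homomorphism `ℤ ∗ H →* H ∗ K` sending the free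
generator `y` to `f` (included in `H ∗ K` via `K`) and restricting on `H` to the canonical
inclusion `H → H ∗ K` kills no element of `ℤ ∗ H` lying outside the canonical copy of `H`. -/
theorem stmt9 (H K : Type*) [Group H] [Group K] (f : K)
    (hf : ∀ k : ℤ, k ≠ 0 → f ^ k ≠ 1)
    (φ : Monoid.Coprod (FreeGroup Unit) H →* Monoid.Coprod H K)
    (hφ : φ = Monoid.Coprod.lift
      (FreeGroup.lift fun _ : Unit => (Monoid.Coprod.inr f : Monoid.Coprod H K))
      (Monoid.Coprod.inl : H →* Monoid.Coprod H K)) :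
    ∀ w : Monoid.Coprod (FreeGroup Unit) H,
      w ∉ Set.range (Monoid.Coprod.inr : H →* Monoid.Coprod (FreeGroup Unit) H) →
        φ w ≠ 1 := by
  intro w hw h1
  exact hw ⟨1, by rw [map_one, (map_eq_one_iff φ (stmt9_general H K f hf φ hφ)).1 h1]⟩
end

section
/- Let G be a group, let h ∈ G, let A = ⟨h⟩ be the cyclic subgroup generated by h, and let H = ⟨G, t ∣ t a t⁻¹ = a for all a ∈ A⟩ be the HNN extension of G with both associated subgroups equal to A and associated isomorphism the identity, with stable letter t. Then for all u, v ∈ G with u ∉ A and v ∉ A, the commutator [u, t⁻¹ v t] = u⁻¹ t⁻¹ v⁻¹ t u t⁻¹ v t is not equal to 1 in H. -/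
/-!
An alternating product `g (t⁻¹ b₁ t) a₁ (t⁻¹ b₂ t) a₂ ⋯ (t⁻¹ bₙ t) aₙ` can only contain the pinches
`t⁻¹ bᵢ t` with `bᵢ ∈ B` and `t aᵢ t⁻¹` with `aᵢ ∈ A` and `i < n`. If there are none, Britton's
Lemma keeps the product outside `G` as soon as `n ≥ 1`. The commutator `[u, t⁻¹ v t]` is the case
`n = 2`, with `g = u⁻¹`, `b₁ = v⁻¹`, `a₁ = u`, `b₂ = v` and `a₂ = 1`.
-/

section

open HNNExtension NormalWord

variable {G : Type*} [Group G] {A B : Subgroup G}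

theorem isChain_flatMap_alternating {l : List (G × G)} (hB : ∀ p ∈ l, p.1 ∉ B)
    (hA : l.IsChain fun p _ => p.2 ∉ A) :
    (l.flatMap fun p => [((-1 : ℤˣ), p.1), (1, p.2)]).IsChain
      fun x y => x.2 ∈ toSubgroup A B x.1 → x.1 = y.1 := by
  induction hA with
  | nil => exact .nil
  | singleton => simp_all
  | cons_cons => simp_all

theorem of_mul_prod_inv_t_conj_notMem_range_of (φ : A ≃* B) (g : G) {l : List (G × G)}
    (hl : l ≠ []) (hB : ∀ p ∈ l, p.1 ∉ B) (hA : l.IsChain fun p _ => p.2 ∉ A) :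
    of g * (l.map fun p => t⁻¹ * of p.1 * t * of p.2).prod ∉
      (of.range : Subgroup (HNNExtension G A B φ)) := by
  intro hmem
  let w : ReducedWord G A B :=
    ⟨g, l.flatMap fun p => [(-1, p.1), (1, p.2)], isChain_flatMap_alternating hB hA⟩
  have hprod : w.prod φ = of g * (l.map fun p => t⁻¹ * of p.1 * t * of p.2).prod := by
    simp [w, ReducedWord.prod, List.flatMap, List.prod_flatten, mul_assoc, Function.comp_def]
  have hnil : w.toList = [] :=
    HNNExtension.ReducedWord.toList_eq_nil_of_mem_of_range φ w (hprod ▸ hmem)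
  obtain ⟨p, hp⟩ := List.exists_mem_of_ne_nil l hl
  simpa using List.flatMap_eq_nil_iff.mp hnil p hp

theorem stmt10_general (φ : A ≃* B) {u v : G} (hu : u ∉ A) (hv : v ∉ B) :
    ((of u)⁻¹ * t⁻¹ * (of v)⁻¹ * t * of u * t⁻¹ * of v * t : HNNExtension G A B φ) ∉
      (of.range : Subgroup (HNNExtension G A B φ)) := by
  simpa [mul_assoc] using of_mul_prod_inv_t_conj_notMem_range_of φ u⁻¹ (l := [(v⁻¹, u), (v, 1)])
    (by simp) (by simp [hv]) (by simp [hu])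

end

/-- Britton's-Lemma consequence: in the HNN extension `H = ⟨G, t ∣ t a t⁻¹ = a, a ∈ ⟨h⟩⟩`
of `G` centralizing the cyclic subgroup `A = ⟨h⟩`, the commutator `[u, t⁻¹ v t]` is
nontrivial whenever `u, v ∈ G` lie outside `A`. -/
theorem stmt10 (G : Type*) [Group G] (h : G)
    (u v : G) (hu : u ∉ Subgroup.zpowers h) (hv : v ∉ Subgroup.zpowers h) :
    ((HNNExtension.of u)⁻¹ * HNNExtension.t⁻¹ * (HNNExtension.of v)⁻¹ * HNNExtension.t *
        HNNExtension.of u * HNNExtension.t⁻¹ * HNNExtension.of v * HNNExtension.t :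
      HNNExtension G (Subgroup.zpowers h) (Subgroup.zpowers h)
        (MulEquiv.refl (Subgroup.zpowers h))) ≠ 1 :=
  fun heq => stmt10_general (MulEquiv.refl _) hu hv (heq ▸ one_mem _)
end
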